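/- arXiv:1606.03351 — 2 statements merged into one kernel-verified Lean document; each statement's English description precedes it below -/
import Mathlib

section
/- For any prime p ≥ 5, the sum ∑_{n=0}^{2p-1} binomial(2n, n) is congruent to 3 modulo p if p ≡ 1 (mod 3), and congruent to -3 modulo p if p ≡ 2 (mod 3). -/
/-- A sequence in `ZMod p` satisfying the recurrence of the central binomial coefficients is
determined below `p` by its initial value. -/
theorem ZMod.eq_mul_of_centralBinom_recurrence {p : ℕ} [Fact p.Prime] {u v : ℕ → ZMod p}
    {c : ZMod p} (h0 : u 0 = c * v 0)
    (hu : ∀ n : ℕ, ((n : ZMod p) + 1) * u (n + 1) = 2 * (2 * n + 1) * u n)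
    (hv : ∀ n : ℕ, ((n : ZMod p) + 1) * v (n + 1) = 2 * (2 * n + 1) * v n)
    {n : ℕ} (hn : n < p) : u n = c * v n := by
  induction n with
  | zero => exact h0
  | succ k ih =>
    have hk : ((k : ZMod p) + 1) ≠ 0 := by
      intro h
      have h' : ((k + 1 : ℕ) : ZMod p) = 0 := by exact_mod_cast h
      exact Nat.not_dvd_of_pos_of_lt k.succ_pos hn ((ZMod.natCast_eq_zero_iff _ _).1 h')
    apply mul_left_cancel₀ hk
    rw [hu, ih (by omega)]
    linear_combination -c * hv k

theorem Nat.cast_succ_mul_centralBinom_succ (R : Type*) [CommRing R] (n : ℕ) :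
    ((n : R) + 1) * (Nat.centralBinom (n + 1) : R) = 2 * (2 * n + 1) * Nat.centralBinom n := by
  exact_mod_cast congrArg (Nat.cast : ℕ → R) (Nat.succ_mul_centralBinom_succ n)

theorem Nat.cast_succ_mul_choose_succ (R : Type*) [CommRing R] (h n : ℕ) :
    ((n : R) + 1) * (h.choose (n + 1) : R) = (h - n) * h.choose n := by
  have key := congrArg (Nat.cast : ℕ → R) (Nat.choose_succ_right_eq h n)
  rcases le_or_gt n h with hn | hn
  · push_cast [Nat.cast_sub hn] at key
    linear_combination key
  · simp [Nat.choose_eq_zero_of_lt hn, Nat.choose_eq_zero_of_lt (Nat.lt_succ_of_lt hn)]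

theorem ZMod.centralBinom_prime {p : ℕ} [Fact p.Prime] :
    (Nat.centralBinom p : ZMod p) = 2 := by
  have hp : 0 < p := (Fact.out : p.Prime).pos
  have h := Choose.choose_modEq_choose_mod_mul_choose_div_nat (n := 2 * p) (k := p) (p := p)
  rw [← ZMod.natCast_eq_natCast_iff] at h
  simpa [Nat.centralBinom, Nat.mul_div_cancel _ hp, Nat.div_self hp] using h

theorem ZMod.centralBinom_prime_add {p : ℕ} [Fact p.Prime] {n : ℕ} (hn : n < p) :
    (Nat.centralBinom (p + n) : ZMod p) = 2 * Nat.centralBinom n := by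
  refine ZMod.eq_mul_of_centralBinom_recurrence
    (u := fun n => (Nat.centralBinom (p + n) : ZMod p))
    (v := fun n => (Nat.centralBinom n : ZMod p)) ?_ ?_ ?_ hn
  · simp [ZMod.centralBinom_prime]
  · intro n
    simpa [add_assoc] using Nat.cast_succ_mul_centralBinom_succ (ZMod p) (p + n)
  · exact Nat.cast_succ_mul_centralBinom_succ (ZMod p)

theorem ZMod.centralBinom_eq_choose_half {p : ℕ} [Fact p.Prime] (hp2 : p ≠ 2) {n : ℕ}
    (hn : n < p) :
    (Nat.centralBinom n : ZMod p) = (-4) ^ n * ((p / 2).choose n : ZMod p) := by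
  have hodd : 2 * (p / 2) + 1 = p := by
    have := (Fact.out : p.Prime).eq_two_or_odd
    omega
  have hhalf : 2 * ((p / 2 : ℕ) : ZMod p) + 1 = 0 := by
    have h := congrArg (Nat.cast : ℕ → ZMod p) hodd
    simpa only [Nat.cast_add, Nat.cast_mul, Nat.cast_one, Nat.cast_ofNat,
      CharP.cast_eq_zero] using h
  have h := ZMod.eq_mul_of_centralBinom_recurrence (c := 1)
    (u := fun n => (Nat.centralBinom n : ZMod p))
    (v := fun n => (-4) ^ n * ((p / 2).choose n : ZMod p)) (by simp)
    (Nat.cast_succ_mul_centralBinom_succ (ZMod p)) ?_ hn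
  · simpa using h
  · intro n
    have h := Nat.cast_succ_mul_choose_succ (ZMod p) (p / 2) n
    linear_combination (-4) ^ (n + 1) * h - 2 * (-4) ^ n * ((p / 2).choose n : ZMod p) * hhalf

theorem ZMod.sum_range_prime_centralBinom {p : ℕ} [Fact p.Prime] (hp2 : p ≠ 2) :
    ∑ n ∈ Finset.range p, (Nat.centralBinom n : ZMod p) = (-3) ^ (p / 2) := by
  have hp := (Fact.out : p.Prime).two_le
  calc ∑ n ∈ Finset.range p, (Nat.centralBinom n : ZMod p)
      = ∑ n ∈ Finset.range p, (-4) ^ n * ((p / 2).choose n : ZMod p) :=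
        Finset.sum_congr rfl fun n hn =>
          ZMod.centralBinom_eq_choose_half hp2 (Finset.mem_range.1 hn)
    _ = ∑ n ∈ Finset.range (p / 2 + 1), (-4) ^ n * ((p / 2).choose n : ZMod p) := by
        symm
        refine Finset.sum_subset (Finset.range_subset_range.2 (by omega)) fun n _ hn => ?_
        rw [Finset.mem_range, not_lt] at hn
        simp [Nat.choose_eq_zero_of_lt (show p / 2 < n by omega)]
    _ = (-4 + 1) ^ (p / 2) := by simp [add_pow]
    _ = (-3) ^ (p / 2) := by norm_num

theorem legendreSym_neg_three {p : ℕ} [Fact p.Prime] (hp2 : p ≠ 2) :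
    legendreSym p (-3) = legendreSym 3 p := by
  have hodd := (Fact.out : p.Prime).eq_two_or_odd.resolve_left hp2
  have hmul : legendreSym p (-3) = legendreSym p (-1) * legendreSym p 3 := by
    rw [← legendreSym.mul]; norm_num
  rw [hmul, legendreSym.at_neg_one hp2]
  rcases (by omega : p % 4 = 1 ∨ p % 4 = 3) with h | h
  · rw [ZMod.χ₄_nat_one_mod_four h, one_mul]
    exact (legendreSym.quadratic_reciprocity_one_mod_four h (by norm_num)).symm
  · rw [ZMod.χ₄_nat_three_mod_four h]
    have := legendreSym.quadratic_reciprocity_three_mod_four (p := p) (q := 3) h (by norm_num)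
    rw [this]
    simp

theorem ZMod.sum_range_two_mul_prime_centralBinom {p : ℕ} [Fact p.Prime] (hp2 : p ≠ 2) :
    ∑ n ∈ Finset.range (2 * p), (Nat.centralBinom n : ZMod p) =
      3 * (legendreSym 3 p : ZMod p) := by
  rw [two_mul, Finset.sum_range_add, Finset.sum_congr rfl fun n hn =>
    ZMod.centralBinom_prime_add (Finset.mem_range.1 hn), ← Finset.mul_sum,
    ZMod.sum_range_prime_centralBinom hp2, ← legendreSym_neg_three hp2, legendreSym.eq_pow]
  push_cast
  ring

theorem sum_centralBinom_two_p_mod_p (p : ℕ) (hp : p.Prime) (hp5 : 5 ≤ p) :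
    (p % 3 = 1 → (∑ n ∈ Finset.range (2 * p), (Nat.centralBinom n : ZMod p)) = 3) ∧
    (p % 3 = 2 → (∑ n ∈ Finset.range (2 * p), (Nat.centralBinom n : ZMod p)) = -3) := by
  have : Fact p.Prime := ⟨hp⟩
  rw [ZMod.sum_range_two_mul_prime_centralBinom (by omega), legendreSym.mod]
  constructor <;> intro h
  · have h' : (p : ℤ) % (3 : ℕ) = 1 := by omega
    rw [h', legendreSym.at_one]
    simp
  · have h' : (p : ℤ) % (3 : ℕ) = 2 := by omega
    have h2 : legendreSym 3 2 = -1 := by decide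
    rw [h', h2]
    simp
end

section
/- For any prime p ≥ 5, the sum ∑_{n=0}^{p-1} binomial(2n, n) is congruent to 1 modulo p^2 if p ≡ 1 (mod 3), and congruent to -1 modulo p^2 if p ≡ 2 (mod 3). -/
/-- The nontrivial quadratic character modulo `3`, as a function on the integers. -/
def chiThree (x : ℤ) : ℤ := if x % 3 = 1 then 1 else if x % 3 = 2 then -1 else 0

/-- The restriction of `chiThree` to positive integers, extended by zero. -/
def chiThreePos (x : ℤ) : ℤ := if 0 < x then chiThree x else 0

lemma chiThree_add_chiThree_sub_one (x : ℤ) :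
    chiThree x + chiThree (x - 1) = -chiThree (x + 1) := by
  unfold chiThree
  split_ifs <;> omega

lemma chiThreePos_second_difference (x : ℤ) :
    chiThreePos (x + 1) + 2 * chiThreePos x + chiThreePos (x - 1) =
      chiThreePos x + if x = 0 then 1 else 0 := by
  unfold chiThreePos chiThree
  split_ifs <;> omega

lemma sum_range_choose_succ_mul (f : ℕ → ℤ) (m : ℕ) :
    ∑ k ∈ Finset.range (m + 2), ((m + 1).choose k : ℤ) * f k =
      ∑ k ∈ Finset.range (m + 1), (m.choose k : ℤ) * (f k + f (k + 1)) := by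
  simpa only [mul_add, Finset.sum_add_distrib] using
    Finset.sum_choose_succ_mul (fun i _ => f i) m

lemma sum_range_choose_mul_chiThree (m : ℕ) (r : ℤ) :
    ∑ k ∈ Finset.range (m + 1), (m.choose k : ℤ) * chiThree (r - k) =
      (-1) ^ m * chiThree (r + m) := by
  induction m generalizing r with
  | zero => simp
  | succ m ih =>
    have h : ∀ k : ℕ, chiThree (r - k) + chiThree (r - (k + 1 : ℕ)) =
        -chiThree (r + 1 - k) := fun k => by
      convert chiThree_add_chiThree_sub_one (r - k) using 3 <;> push_cast <;> ring_nf
    rw [sum_range_choose_succ_mul (fun k => chiThree (r - k))]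
    simp only [h, mul_neg, Finset.sum_neg_distrib, ih]
    rw [pow_succ]
    push_cast
    ring_nf

/-- Partial sums of the central binomial coefficients as a twisted sum over half a row of
Pascal's triangle. -/
lemma sum_range_centralBinom (n : ℕ) :
    ∑ k ∈ Finset.range n, (k.centralBinom : ℤ) =
      ∑ k ∈ Finset.range (2 * n + 1), ((2 * n).choose k : ℤ) * chiThreePos (n - k) := by
  induction n with
  | zero => simp [chiThreePos]
  | succ n ih =>
    have h : ∀ k : ℕ,
        chiThreePos ((n + 1 : ℕ) - k) + chiThreePos ((n + 1 : ℕ) - (k + 1 : ℕ)) +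
          (chiThreePos ((n + 1 : ℕ) - (k + 1 : ℕ)) +
            chiThreePos ((n + 1 : ℕ) - (k + 1 + 1 : ℕ))) =
        chiThreePos (n - k) + if n = k then 1 else 0 := fun k => by
      have e := chiThreePos_second_difference (n - k)
      rw [show ((n + 1 : ℕ) : ℤ) - k = n - k + 1 by push_cast; ring,
        show ((n + 1 : ℕ) : ℤ) - (k + 1 : ℕ) = n - k by push_cast; ring,
        show ((n + 1 : ℕ) : ℤ) - (k + 1 + 1 : ℕ) = n - k - 1 by push_cast; ring]
      simp only [sub_eq_zero, Nat.cast_inj] at e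
      linarith
    rw [Finset.sum_range_succ, ih, show 2 * (n + 1) = 2 * n + 1 + 1 by ring,
      sum_range_choose_succ_mul (fun k => chiThreePos ((n + 1 : ℕ) - k)),
      sum_range_choose_succ_mul (fun k => chiThreePos ((n + 1 : ℕ) - k) +
        chiThreePos ((n + 1 : ℕ) - (k + 1 : ℕ)))]
    simp only [h, mul_add, Finset.sum_add_distrib, mul_ite, mul_one, mul_zero]
    rw [Finset.sum_ite_eq, if_pos (Finset.mem_range.2 (by omega)), Nat.centralBinom]

lemma Nat.Prime.choose_two_mul_modEq {p k : ℕ} (hp : p.Prime) (h0 : 0 < k) (hk : k < p) :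
    ((2 * p).choose k : ℤ) ≡ 2 * p.choose k [ZMOD (p ^ 2 : ℕ)] := by
  obtain ⟨k, rfl⟩ : ∃ j, k = j + 1 := ⟨k - 1, by omega⟩
  have hdvd : p ^ 2 ∣ ∑ i ∈ Finset.range k, p.choose (i + 1) * p.choose (k - i) := by
    refine Finset.dvd_sum fun i hi => ?_
    rw [Finset.mem_range] at hi
    rw [sq]
    exact mul_dvd_mul (hp.dvd_choose_self (by omega) (by omega))
      (hp.dvd_choose_self (by omega) (by omega))
  have h : (2 * p).choose (k + 1) = 2 * p.choose (k + 1) +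
      ∑ i ∈ Finset.range k, p.choose (i + 1) * p.choose (k - i) := by
    rw [two_mul p, Nat.add_choose_eq,
      Finset.Nat.sum_antidiagonal_eq_sum_range_succ (fun i j => p.choose i * p.choose j),
      Finset.sum_range_succ, Finset.sum_range_succ']
    simp only [Nat.add_sub_add_right]
    simp
    ring
  refine (Int.modEq_iff_dvd.2 ?_).symm
  rw [h]
  push_cast
  rw [add_sub_cancel_left]
  exact_mod_cast hdvd

lemma sum_range_choose_mul_chiThree_interior {p : ℕ} (hp : Odd p) :
    ∑ k ∈ Finset.Ico 1 p, (p.choose k : ℤ) * chiThree (p - k) = 0 := by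
  have h := sum_range_choose_mul_chiThree p p
  have h2 : chiThree (p + p) = -chiThree p := by
    unfold chiThree
    split_ifs <;> omega
  rw [hp.neg_one_pow, h2, Finset.sum_range_succ, Finset.range_eq_Ico,
    Finset.sum_eq_sum_Ico_succ_bot hp.pos] at h
  have h0 : chiThree 0 = 0 := rfl
  simpa [h0] using h

lemma sum_centralBinom_modEq {p : ℕ} (hp : p.Prime) (hodd : Odd p) :
    ∑ n ∈ Finset.range p, (n.centralBinom : ℤ) ≡ chiThree p [ZMOD (p ^ 2 : ℕ)] := by
  have hzero : ∀ k ∈ Finset.range (2 * p + 1), k ∉ Finset.range p →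
      ((2 * p).choose k : ℤ) * chiThreePos (p - k) = 0 := fun k _ hk => by
    rw [Finset.mem_range] at hk
    rw [chiThreePos, if_neg (by omega), mul_zero]
  rw [sum_range_centralBinom, ← Finset.sum_subset (Finset.range_mono (by omega)) hzero,
    Finset.range_eq_Ico, Finset.sum_eq_sum_Ico_succ_bot hp.pos]
  have hmid : ∑ k ∈ Finset.Ico 1 p, ((2 * p).choose k : ℤ) * chiThreePos (p - k) ≡
      ∑ k ∈ Finset.Ico 1 p, 2 * ((p.choose k : ℤ) * chiThree (p - k)) [ZMOD (p ^ 2 : ℕ)] := by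
    refine Int.ModEq.sum fun k hk => ?_
    rw [Finset.mem_Ico] at hk
    rw [chiThreePos, if_pos (by omega), ← mul_assoc]
    exact (hp.choose_two_mul_modEq hk.1 hk.2).mul_right _
  rw [← Finset.mul_sum, sum_range_choose_mul_chiThree_interior hodd, mul_zero] at hmid
  simpa [chiThreePos, hp.pos] using hmid.add_left (chiThree p)

theorem sum_centralBinom_mod_p_sq (p : ℕ) (hp : p.Prime) (hp5 : 5 ≤ p) :
    (p % 3 = 1 → (∑ n ∈ Finset.range p, (Nat.centralBinom n : ZMod (p ^ 2))) = 1) ∧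
    (p % 3 = 2 → (∑ n ∈ Finset.range p, (Nat.centralBinom n : ZMod (p ^ 2))) = -1) := by
  have h := (ZMod.intCast_eq_intCast_iff _ _ _).2
    (sum_centralBinom_modEq hp (hp.odd_of_ne_two (by omega)))
  push_cast at h
  rw [h]
  constructor <;> intro h3
  · rw [chiThree, if_pos (by omega), Int.cast_one]
  · rw [chiThree, if_neg (by omega), if_pos (by omega), Int.cast_neg, Int.cast_one]
end
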